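/- Recursive last-token decomposition: let s be a nonempty string, let θ(s) be the last token of 𝕋_D(s), and let s_pre denote s with the suffix θ(s) removed. Then 𝕋_D(s) = 𝕋_D(s_pre) ++ [θ(s)]. -/

import Mathlib

/-!
Common BPE formalization preamble.

A token is a (nonempty) string over the alphabet `α`, modeled as `List α`.
A merge rule is a pair of tokens; a dictionary is an ordered list of rules
(earlier rules have strictly higher priority).
-/

namespace BPE

variable {α : Type*} [DecidableEq α]

/-- A token is a string over the alphabet (nonemptiness is imposed by hypotheses). -/
abbrev Token (α : Type*) := List α

/-- A merge rule is an ordered pair of tokens. -/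
abbrev Rule (α : Type*) := Token α × Token α

/-- A dictionary is an ordered list of merge rules; earlier = higher priority. -/
abbrev Dict (α : Type*) := List (Rule α)

/-- Apply a single merge rule to a token list, scanning left to right and replacing
each adjacent occurrence of `r.1` followed by `r.2` by the concatenated token,
resuming the scan after the newly formed token (no overlaps). -/
def applyRule (r : Rule α) : List (Token α) → List (Token α)
  | [] => []
  | [t] => [t]
  | t :: u :: rest =>
      if t = r.1 ∧ u = r.2 then (r.1 ++ r.2) :: applyRule r rest
      else t :: applyRule r (u :: rest)

/-- `φ₀(s)`: the list of single-character tokens of `s`. -/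
def phi0 (s : List α) : List (Token α) := s.map (fun c => [c])

/-- `φ_k(s)`: the token list after applying the first `k` rules of `D` to `s`. -/
def phiK (D : Dict α) (k : ℕ) (s : List α) : List (Token α) :=
  (D.take k).foldl (fun φ r => applyRule r φ) (phi0 s)

/-- The BPE tokenization `𝕋_D(s)`. -/
def tokenize (D : Dict α) (s : List α) : List (Token α) :=
  phiK D D.length s

/-- Detokenization `π`: concatenation of the tokens. -/
def detok (φ : List (Token α)) : List α := φ.flatten

/-- A dictionary is valid if all rule components are genuine (nonempty) tokens. -/
def ValidDict (D : Dict α) : Prop := ∀ r ∈ D, r.1 ≠ [] ∧ r.2 ≠ []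

/-- A token `t` is canonical if `𝕋_D(t) = [t]`. -/
def IsCanonical (D : Dict α) (t : Token α) : Prop := tokenize D t = [t]

/-- The last token `θ(s)`: last element of `𝕋_D(s)` (defaulting to `[]`). -/
def theta (D : Dict α) (s : List α) : Token α := (tokenize D s).getLastD []

/-- `j` (0-based) is the index of the canonical rule of `t`:
`φ_j(t)` has exactly two tokens and `φ_{j+1}(t) = [t]`. -/
def IsCanonicalRuleIdx (D : Dict α) (t : Token α) (j : ℕ) : Prop :=
  j < D.length ∧ (phiK D j t).length = 2 ∧ phiK D (j + 1) t = [t]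

open Classical in
/-- The (0-based) index of the canonical rule of `t` (junk value `0` if none exists). -/
noncomputable def canonIdx (D : Dict α) (t : Token α) : ℕ :=
  if h : ∃ j, IsCanonicalRuleIdx D t j then h.choose else 0

/-- Predecessor `pre(t)`: first token of the two-token stage `φ_{j-1}(t)`. -/
noncomputable def pre (D : Dict α) (t : Token α) : Token α :=
  (phiK D (canonIdx D t) t).headD []

/-- Successor `suc(t)`: second token of the two-token stage `φ_{j-1}(t)`. -/
noncomputable def suc (D : Dict α) (t : Token α) : Token α :=
  (phiK D (canonIdx D t) t).getLastD []

/-- `InPath D x a` means `a ∈ P(x)`: `a` is obtained from `x` by iterating `suc`,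
i.e. `a` lies on the ancestor path of `x` in the Successor Forest. -/
def InPath (D : Dict α) (x a : Token α) : Prop :=
  ∃ n : ℕ, (suc D)^[n] x = a

/-- `s` with the suffix `u` removed. -/
def dropSuffix (s u : List α) : List α := s.take (s.length - u.length)

/-- The Prefix Last-Token Condition of the canonical suffix token `t`
with respect to the string `s`. Atomic tokens satisfy it by definition;
a non-atomic token must satisfy Reachability and Priority dominance. -/
def PLTC (D : Dict α) (s t : Token α) : Prop :=
  t.length = 1 ∨
    (1 < t.length ∧
      InPath D (theta D (dropSuffix s (suc D t))) (pre D t) ∧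
      (theta D (dropSuffix s (suc D t)) ≠ pre D t →
        ∀ u : Token α, 1 < u.length → IsCanonical D u → suc D u = pre D t →
          InPath D (theta D (dropSuffix s (suc D t))) u →
          canonIdx D t < canonIdx D u))

/-!
Each merge acts on two adjacent tokens, so any cut between two tokens of `𝕋_D(s)` is already a cut
between two tokens at every earlier stage, and the rules act independently on its two sides. Since
merging preserves the underlying string, each side of the cut is then the tokenization of its own
detokenization; for the cut before the last token, the left side is `𝕋_D(s_pre)`.
-/

section ApplyRule

variable (r : Rule α)

theorem applyRule_cons_cons_self (l : List (Token α)) :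
    applyRule r (r.1 :: r.2 :: l) = (r.1 ++ r.2) :: applyRule r l :=
  if_pos ⟨rfl, rfl⟩

variable {r} in
theorem applyRule_cons_of_not {t : Token α} {l : List (Token α)}
    (h : ¬(t = r.1 ∧ l.head? = some r.2)) : applyRule r (t :: l) = t :: applyRule r l := by
  cases l with
  | nil => rfl
  | cons u l => exact if_neg fun ⟨ht, hu⟩ => h ⟨ht, congrArg some hu⟩

omit [DecidableEq α] in
@[elab_as_elim]
theorem applyRule_induction {motive : List (Token α) → Prop} (nil : motive [])
    (merge : ∀ l, motive l → motive (r.1 :: r.2 :: l))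
    (keep : ∀ t l, ¬(t = r.1 ∧ l.head? = some r.2) → motive l → motive (t :: l))
    (φ : List (Token α)) : motive φ := by
  classical
  induction φ using applyRule.induct r with
  | case1 => exact nil
  | case2 t => exact keep t [] (by simp) nil
  | case3 t u l h ih =>
    obtain ⟨rfl, rfl⟩ := h
    exact merge l ih
  | case4 t u l h ih => exact keep t (u :: l) (by simpa using h) ih

theorem detok_applyRule (φ : List (Token α)) : detok (applyRule r φ) = detok φ := by
  unfold detok
  induction φ using applyRule_induction r with
  | nil => rfl
  | merge l ih => simp only [applyRule_cons_cons_self, List.flatten_cons, ih, List.append_assoc]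
  | keep t l h ih => simp only [applyRule_cons_of_not h, List.flatten_cons, ih]

variable {r} in
theorem exists_append_of_applyRule_eq_append {φ A B : List (Token α)}
    (h : applyRule r φ = A ++ B) :
    ∃ φ₁ φ₂, φ = φ₁ ++ φ₂ ∧ applyRule r φ₁ = A ∧ applyRule r φ₂ = B := by
  induction φ using applyRule_induction r generalizing A with
  | nil =>
    obtain ⟨rfl, rfl⟩ := List.nil_eq_append_iff.1 h
    exact ⟨[], [], rfl, rfl, rfl⟩
  | merge l ih =>
    rcases A with _ | ⟨a, A⟩
    · exact ⟨[], _, rfl, rfl, h⟩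
    rw [applyRule_cons_cons_self, List.cons_append, List.cons.injEq] at h
    obtain ⟨rfl, h⟩ := h
    obtain ⟨φ₁, φ₂, rfl, rfl, rfl⟩ := ih h
    exact ⟨r.1 :: r.2 :: φ₁, φ₂, rfl, applyRule_cons_cons_self r φ₁, rfl⟩
  | keep t l hkeep ih =>
    rcases A with _ | ⟨a, A⟩
    · exact ⟨[], _, rfl, rfl, h⟩
    rw [applyRule_cons_of_not hkeep, List.cons_append, List.cons.injEq] at h
    obtain ⟨rfl, h⟩ := h
    obtain ⟨φ₁, φ₂, rfl, rfl, rfl⟩ := ih h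
    have hkeep₁ : ¬(t = r.1 ∧ φ₁.head? = some r.2) := fun ⟨ht, hφ₁⟩ =>
      hkeep ⟨ht, by rw [List.head?_append, hφ₁, Option.some_or]⟩
    exact ⟨t :: φ₁, φ₂, rfl, applyRule_cons_of_not hkeep₁, rfl⟩

end ApplyRule

/-- The rules of `D` applied in order to an arbitrary token list. The tokenization `𝕋_D(s)` is the
case `φ₀(s)`, but inductions on `D` need other starting lists. -/
def applyDict (D : Dict α) (φ : List (Token α)) : List (Token α) :=
  D.foldl (fun φ r => applyRule r φ) φ

theorem tokenize_eq_applyDict (D : Dict α) (s : List α) :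
    tokenize D s = applyDict D (phi0 s) := by
  rw [tokenize, phiK, List.take_length, applyDict]

theorem detok_applyDict (D : Dict α) (φ : List (Token α)) : detok (applyDict D φ) = detok φ := by
  induction D generalizing φ with
  | nil => rfl
  | cons r D ih => exact (ih (applyRule r φ)).trans (detok_applyRule r φ)

theorem exists_append_of_applyDict_eq_append {D : Dict α} {φ A B : List (Token α)}
    (h : applyDict D φ = A ++ B) :
    ∃ φ₁ φ₂, φ = φ₁ ++ φ₂ ∧ applyDict D φ₁ = A ∧ applyDict D φ₂ = B := by
  induction D generalizing φ with
  | nil => exact ⟨A, B, h, rfl, rfl⟩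
  | cons r D ih =>
    obtain ⟨ψ₁, ψ₂, hψ, rfl, rfl⟩ := ih h
    obtain ⟨φ₁, φ₂, rfl, rfl, rfl⟩ := exists_append_of_applyRule_eq_append hψ
    exact ⟨φ₁, φ₂, rfl, rfl, rfl⟩

theorem detok_tokenize (D : Dict α) (s : List α) : detok (tokenize D s) = s := by
  rw [tokenize_eq_applyDict, detok_applyDict, detok, phi0, ← List.flatMap_def,
    List.flatMap_singleton']

theorem tokenize_detok_of_tokenize_eq_append {D : Dict α} {s : List α} {A B : List (Token α)}
    (h : tokenize D s = A ++ B) : tokenize D (detok A) = A ∧ tokenize D (detok B) = B := by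
  rw [tokenize_eq_applyDict] at h
  obtain ⟨φ₁, φ₂, hφ, rfl, rfl⟩ := exists_append_of_applyDict_eq_append h
  obtain ⟨s₁, s₂, rfl, rfl, rfl⟩ : ∃ s₁ s₂, s = s₁ ++ s₂ ∧ phi0 s₁ = φ₁ ∧ phi0 s₂ = φ₂ :=
    List.map_eq_append_iff.1 hφ
  simp only [← tokenize_eq_applyDict, detok_tokenize, and_self]

theorem tokenize_ne_nil (D : Dict α) {s : List α} (hs : s ≠ []) : tokenize D s ≠ [] := fun h =>
  hs (by rw [← detok_tokenize D s, h, detok, List.flatten_nil])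

theorem dropLast_append_theta (D : Dict α) {s : List α} (hs : s ≠ []) :
    (tokenize D s).dropLast ++ [theta D s] = tokenize D s := by
  have hne := tokenize_ne_nil D hs
  rw [theta, List.getLastD_eq_getLast?, List.getLast?_eq_some_getLast hne, Option.getD_some,
    List.dropLast_append_getLast hne]

omit [DecidableEq α] in
theorem dropSuffix_append (s u : List α) : dropSuffix (s ++ u) u = s := by
  rw [dropSuffix, List.length_append, Nat.add_sub_cancel, List.take_left]

theorem dropSuffix_theta (D : Dict α) {s : List α} (hs : s ≠ []) :
    dropSuffix s (theta D s) = detok (tokenize D s).dropLast := by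
  have hs_eq : detok (tokenize D s).dropLast ++ theta D s = s :=
    calc detok (tokenize D s).dropLast ++ theta D s
        = detok ((tokenize D s).dropLast ++ [theta D s]) := by
          rw [detok, detok, List.flatten_append, List.flatten_singleton]
      _ = s := by rw [dropLast_append_theta D hs, detok_tokenize]
  have hdrop := dropSuffix_append (detok (tokenize D s).dropLast) (theta D s)
  rwa [hs_eq] at hdrop

theorem last_token_decomposition_general (D : Dict α) {s : List α} (hs : s ≠ []) :
    tokenize D s = tokenize D (dropSuffix s (theta D s)) ++ [theta D s] := by
  have hcut := dropLast_append_theta D hs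
  rw [dropSuffix_theta D hs, (tokenize_detok_of_tokenize_eq_append hcut.symm).1, hcut]

/-- **Recursive last-token decomposition.** For nonempty `s`,
`𝕋_D(s) = 𝕋_D(s_pre) ++ [θ(s)]`, where `s_pre` is `s` with the suffix `θ(s)` removed. -/
theorem last_token_decomposition [Fintype α] (D : Dict α) (hD : ValidDict D)
    (s : List α) (hs : s ≠ []) :
    tokenize D s = tokenize D (dropSuffix s (theta D s)) ++ [theta D s] :=
  last_token_decomposition_general D hs

end BPE
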